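/- Suppose (Ω_i, 𝒜_i) = (ℝ, ℬ(ℝ)) for all i = 1,…,n. Let P* be a (σ-additive) probability measure on ℬ(ℝ^n) such that all but possibly one of its marginals P*∘π_i^{-1} are discrete and P*(A) = 1 for some compact A ⊂ ℝ^n, and let 𝒰 = {Q ∈ ℙ : Q ≪ P* and (π_1,…,π_n) is a Q-martingale}. Then the condition 'Σ_{i=1}^n μ_i(f_i) ≥ inf_{Q ∈ 𝒰} Q(⊕_{i=1}^n f_i) for all bounded Borel f_1,…,f_n : ℝ → ℝ' (with inf ∅ = ∞) holds if and only if there exists a σ-additive probability measure P on ℬ(ℝ^n) with marginals μ_1,…,μ_n such that P ≪ P* and (π_1,…,π_n) is a P-martingale. -/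

import Mathlib

open MeasureTheory Set ENNReal

namespace FATransport

variable {α : Type*} [MeasurableSpace α]

/-- The collection of measurable sets of `α` (the σ-field `𝒜`), as a type. -/
abbrev MSet (α : Type*) [MeasurableSpace α] := {A : Set α // MeasurableSet A}

/-- A finitely additive probability on the σ-field of `α`, viewed as an element
of `[0,1]^𝒜`: it maps the whole space to `1` and is additive on disjoint pairs. -/
def IsFAP (P : MSet α → unitInterval) : Prop :=
  (P ⟨Set.univ, MeasurableSet.univ⟩ : ℝ) = 1 ∧
    ∀ A B : MSet α, Disjoint A.1 B.1 →
      (P ⟨A.1 ∪ B.1, A.2.union B.2⟩ : ℝ) = (P A : ℝ) + (P B : ℝ)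

/-- `ℙ`, the set of all finitely additive probabilities on `𝒜`, as a subset of
`[0,1]^𝒜` (with its product topology). -/
def FAPs (α : Type*) [MeasurableSpace α] : Set (MSet α → unitInterval) :=
  {P | IsFAP P}

/-- Integral of a simple function with respect to a finitely additive set function. -/
noncomputable def simpleInt (P : MSet α → unitInterval) (s : SimpleFunc α ℝ) : ℝ :=
  ∑ y ∈ s.range, y * (P ⟨(⇑s) ⁻¹' {y}, s.measurableSet_fiber y⟩ : ℝ)

/-- `P(f)` for a bounded measurable `f : α → ℝ`: the supremum of the integrals of
simple functions below `f` (for a f.a.p. `P` and bounded measurable `f` this agrees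
with the integral defined by uniform approximation by simple functions). -/
noncomputable def fapInt (P : MSet α → unitInterval) (f : α → ℝ) : ℝ :=
  sSup (simpleInt P '' {s : SimpleFunc α ℝ | ∀ x, s x ≤ f x})

/-- `P(c) = sup_k P(c ∧ k)` for a `[0,∞]`-valued `c`. -/
noncomputable def fapIntTop (P : MSet α → unitInterval) (c : α → ℝ≥0∞) : ℝ≥0∞ :=
  ⨆ k : ℕ, ENNReal.ofReal (fapInt P (fun x => (c x ⊓ (k : ℝ≥0∞)).toReal))

/-- A real-valued `f` is `P`-integrable iff `P(|f|) < ∞`. -/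
def FapIntegrable (P : MSet α → unitInterval) (f : α → ℝ) : Prop :=
  fapIntTop P (fun x => ENNReal.ofReal |f x|) < ⊤

/-- `P(f) = P(f⁺) - P(f⁻)` for a (`P`-integrable) real-valued `f`. -/
noncomputable def fapIntR (P : MSet α → unitInterval) (f : α → ℝ) : ℝ :=
  (fapIntTop P (fun x => ENNReal.ofReal (f x))).toReal -
    (fapIntTop P (fun x => ENNReal.ofReal (-f x))).toReal

/-- `P ≪ Q` for finitely additive probabilities. -/
def FapAC (P Q : MSet α → unitInterval) : Prop :=
  ∀ A : MSet α, (Q A : ℝ) = 0 → (P A : ℝ) = 0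

variable {n : ℕ} {Ω : Fin n → Type*} [∀ i, MeasurableSpace (Ω i)]

/-- `M`, the set of finitely additive probabilities on `𝒜 = ⊗ᵢ 𝒜ᵢ` whose
`i`-th marginal is `μ i` for every `i`. -/
def couplings (μ : ∀ i, Measure (Ω i)) : Set (MSet (∀ i, Ω i) → unitInterval) :=
  {P | IsFAP P ∧ ∀ (i : Fin n) (B : Set (Ω i)) (hB : MeasurableSet B),
    (P ⟨(fun ω => ω i) ⁻¹' B, (measurable_pi_apply i) hB⟩ : ℝ) = (μ i B).toReal}

end FATransport

namespace FATransport

/-- `(π_1, …, π_n)` is a `P`-martingale for a finitely additive probability `P` on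
`ℬ(ℝⁿ)`: each `P(|π_i|) < ∞`, `P(π_1) = 0`, and `P((π_{i+1} - π_i) g(π_1,…,π_i)) = 0`
for every bounded Borel `g` (encoded as a bounded Borel function on `ℝⁿ` depending
only on the first `i` coordinates). -/
def IsMartFAP {n : ℕ} (hn : 0 < n) (P : MSet (Fin n → ℝ) → unitInterval) : Prop :=
  (∀ i : Fin n, fapIntTop P (fun ω => ENNReal.ofReal |ω i|) < ⊤) ∧
    fapIntR P (fun ω => ω ⟨0, hn⟩) = 0 ∧
    ∀ i j : Fin n, (j : ℕ) = (i : ℕ) + 1 →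
      ∀ g : (Fin n → ℝ) → ℝ, Measurable g → (∃ C, ∀ x, |g x| ≤ C) →
        (∀ x y : Fin n → ℝ, (∀ k : Fin n, k ≤ i → x k = y k) → g x = g y) →
        fapIntR P (fun ω => (ω j - ω i) * g ω) = 0

end FATransport

namespace FATransport

variable {n : ℕ} {Ω : Fin n → Type*} [∀ i, MeasurableSpace (Ω i)]

/-- Condition (4.1) of the paper: `Σᵢ μᵢ(fᵢ) ≥ inf_{Q ∈ 𝒰} Q(⊕ᵢ fᵢ)` for all bounded
measurable `fᵢ : Ωᵢ → ℝ`. The infimum is taken in `EReal`, so that `inf ∅ = ∞` (and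
the condition fails when `𝒰 = ∅`). -/
def DualCond (μ : ∀ i, Measure (Ω i))
    (U : Set (MSet (∀ i, Ω i) → unitInterval)) : Prop :=
  ∀ f : ∀ i, Ω i → ℝ, (∀ i, Measurable (f i)) → (∀ i, ∃ C, ∀ x, |f i x| ≤ C) →
    (⨅ Q ∈ U, ((fapInt Q (fun ω => ∑ i, f i (ω i)) : ℝ) : EReal)) ≤
      ((∑ i, ∫ x, f i x ∂(μ i) : ℝ) : EReal)

end FATransport

namespace FATransport

/-- `(π_1,…,π_n)` is a martingale under a (σ-additive) probability measure `P` on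
`ℬ(ℝⁿ)`. -/
def IsMartMeas {n : ℕ} (hn : 0 < n) (P : MeasureTheory.Measure (Fin n → ℝ)) : Prop :=
  (∀ i : Fin n, Integrable (fun ω => ω i) P) ∧
    (∫ ω, ω ⟨0, hn⟩ ∂P) = 0 ∧
    ∀ i j : Fin n, (j : ℕ) = (i : ℕ) + 1 →
      ∀ g : (Fin n → ℝ) → ℝ, Measurable g → (∃ C, ∀ x, |g x| ≤ C) →
        (∀ x y : Fin n → ℝ, (∀ k : Fin n, k ≤ i → x k = y k) → g x = g y) →
        (∫ ω, (ω j - ω i) * g ω ∂P) = 0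

/-!
The finitely additive probabilities `Q ≪ P*` under which `(π_1, …, π_n)` is a martingale form a
compact convex subset `𝒰` of `[0,1]^𝒜`: since the coordinates are essentially bounded, the
martingale conditions are of the form `Q(f) = 0` with `f` essentially bounded, and such integrals
are affine and continuous in `Q`. If no element of `𝒰` had the marginals `μ_i`, Hahn–Banach would
separate the family `μ_i(B)` from the marginals of `𝒰` by a finite linear combination, that is, by
simple functions `f_i` violating the dual condition. An element `Q` of `𝒰` with marginals `μ_i` is
`σ`-additive: for `i ≠ i₀` the measure `μ_i` is carried by a finite set up to `ε`, so up to
`(n - 1) ε` the charge `Q` lives on finitely many lines parallel to the `i₀`-axis, where it is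
controlled by the measure `μ_{i₀}`.
-/

open Filter Topology

section FinitelyAdditive

variable {α : Type*} [MeasurableSpace α] {Q : MSet α → unitInterval} {A B : Set α}

/-- The value of a set function on `𝒜` as a real number, extended by `0` to nonmeasurable sets. -/
noncomputable def mass (Q : MSet α → unitInterval) (A : Set α) : ℝ :=
  open Classical in if h : MeasurableSet A then (Q ⟨A, h⟩ : ℝ) else 0

lemma mass_coe (Q : MSet α → unitInterval) (A : MSet α) : mass Q A = (Q A : ℝ) :=
  dif_pos A.2

lemma mass_nonneg (Q : MSet α → unitInterval) (A : Set α) : 0 ≤ mass Q A := by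
  unfold mass
  split_ifs
  exacts [unitInterval.nonneg _, le_rfl]

lemma IsFAP.mass_univ (hQ : IsFAP Q) : mass Q univ = 1 :=
  (mass_coe Q ⟨univ, .univ⟩).trans hQ.1

lemma IsFAP.mass_union (hQ : IsFAP Q) (hA : MeasurableSet A) (hB : MeasurableSet B)
    (hAB : Disjoint A B) : mass Q (A ∪ B) = mass Q A + mass Q B := by
  have hadd := hQ.2 ⟨A, hA⟩ ⟨B, hB⟩ hAB
  rwa [← mass_coe, ← mass_coe, ← mass_coe] at hadd

lemma IsFAP.mass_empty (hQ : IsFAP Q) : mass Q ∅ = 0 := by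
  simpa using hQ.mass_union .empty .empty (disjoint_empty ∅)

lemma IsFAP.mass_mono (hQ : IsFAP Q) (hA : MeasurableSet A) (hB : MeasurableSet B)
    (hAB : A ⊆ B) : mass Q A ≤ mass Q B := by
  have hsplit := hQ.mass_union hA (hB.diff hA) disjoint_sdiff_right
  rw [union_sdiff_cancel hAB] at hsplit
  linarith [mass_nonneg Q (B \ A)]

lemma IsFAP.mass_union_le (hQ : IsFAP Q) (hA : MeasurableSet A) (hB : MeasurableSet B) :
    mass Q (A ∪ B) ≤ mass Q A + mass Q B := by
  rw [← union_sdiff_self, hQ.mass_union hA (hB.diff hA) disjoint_sdiff_right]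
  gcongr
  exact hQ.mass_mono (hB.diff hA) hB sdiff_subset

lemma IsFAP.mass_biUnion_le (hQ : IsFAP Q) {ι : Type*} (T : Finset ι) {A : ι → Set α}
    (hA : ∀ t, MeasurableSet (A t)) : mass Q (⋃ t ∈ T, A t) ≤ ∑ t ∈ T, mass Q (A t) := by
  classical
  induction T using Finset.induction_on with
  | empty => simp [hQ.mass_empty]
  | insert t T ht ih =>
    rw [Finset.set_biUnion_insert, Finset.sum_insert ht]
    exact (hQ.mass_union_le (hA t) (T.measurableSet_biUnion fun i _ => hA i)).trans (by gcongr)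

lemma simpleInt_eq_setToSimpleFunc (Q : MSet α → unitInterval) (s : SimpleFunc α ℝ) :
    simpleInt Q s = s.setToSimpleFunc fun A => mass Q A • ContinuousLinearMap.id ℝ ℝ := by
  refine Finset.sum_congr rfl fun y _ => ?_
  rw [← mass_coe, mul_comm]
  rfl

-- Over the zero measure every set is finite and every function integrable, so the integrability
-- hypotheses of the `setToSimpleFunc` API become void.
lemma IsFAP.finMeasAdditive_mass (hQ : IsFAP Q) :
    FinMeasAdditive (0 : Measure α) fun A => mass Q A • ContinuousLinearMap.id ℝ ℝ :=
  fun A B hA hB _ _ hAB => by simp only [hQ.mass_union hA hB hAB, add_smul]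

lemma IsFAP.simpleInt_add (hQ : IsFAP Q) (s t : SimpleFunc α ℝ) :
    simpleInt Q (s + t) = simpleInt Q s + simpleInt Q t := by
  simp only [simpleInt_eq_setToSimpleFunc]
  exact SimpleFunc.setToSimpleFunc_add _ hQ.finMeasAdditive_mass integrable_zero_measure
    integrable_zero_measure

lemma IsFAP.simpleInt_mono (hQ : IsFAP Q) {s t : SimpleFunc α ℝ} (hst : s ≤ t) :
    simpleInt Q s ≤ simpleInt Q t := by
  simp only [simpleInt_eq_setToSimpleFunc]
  exact SimpleFunc.setToSimpleFunc_mono hQ.finMeasAdditive_mass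
    (fun A _ _ x hx => mul_nonneg (mass_nonneg Q A) hx) integrable_zero_measure
    integrable_zero_measure hst

lemma IsFAP.simpleInt_indicator (hQ : IsFAP Q) (hA : MeasurableSet A) (c : ℝ) :
    simpleInt Q (SimpleFunc.piecewise A hA (SimpleFunc.const α c) (SimpleFunc.const α 0)) =
      mass Q A * c := by
  rw [simpleInt_eq_setToSimpleFunc, SimpleFunc.setToSimpleFunc_indicator _ _ hA]
  · rfl
  · rw [hQ.mass_empty, zero_smul]

lemma IsFAP.simpleInt_const (hQ : IsFAP Q) (c : ℝ) : simpleInt Q (SimpleFunc.const α c) = c := by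
  rw [simpleInt_eq_setToSimpleFunc, SimpleFunc.setToSimpleFunc_const]
  · simp [hQ.mass_univ]
  · rw [hQ.mass_empty, zero_smul]

lemma continuous_simpleInt (s : SimpleFunc α ℝ) :
    Continuous fun Q : MSet α → unitInterval => simpleInt Q s := by
  unfold simpleInt
  fun_prop

end FinitelyAdditive

section BoundedIntegral

variable {α : Type*} [MeasurableSpace α] {Q : MSet α → unitInterval} {f g : α → ℝ}

/-- Bounded measurable real functions, the class on which a finitely additive probability has a
genuine (linear, monotone) integral. -/
def BddMeasurable (f : α → ℝ) : Prop := Measurable f ∧ ∃ C, ∀ x, |f x| ≤ C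

lemma BddMeasurable.add (hf : BddMeasurable f) (hg : BddMeasurable g) :
    BddMeasurable (f + g) := by
  obtain ⟨C, hC⟩ := hf.2
  obtain ⟨D, hD⟩ := hg.2
  exact ⟨hf.1.add hg.1, C + D, fun x => (abs_add_le _ _).trans (add_le_add (hC x) (hD x))⟩

lemma BddMeasurable.sum {ι : Type*} {T : Finset ι} {f : ι → α → ℝ}
    (hf : ∀ t ∈ T, BddMeasurable (f t)) : BddMeasurable (∑ t ∈ T, f t) :=
  Finset.sum_induction _ BddMeasurable (fun _ _ => .add) ⟨measurable_const, 0, by simp⟩ hf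

lemma BddMeasurable.comp {β : Type*} [MeasurableSpace β] (hf : BddMeasurable f) {φ : β → α}
    (hφ : Measurable φ) : BddMeasurable (f ∘ φ) :=
  ⟨hf.1.comp hφ, hf.2.imp fun _ hC x => hC (φ x)⟩

lemma BddMeasurable.integrable (hf : BddMeasurable f) (P : Measure α) [IsFiniteMeasure P] :
    Integrable f P :=
  let ⟨C, hC⟩ := hf.2
  .of_bound hf.1.aestronglyMeasurable C (.of_forall hC)

lemma bddMeasurable_indicator_const {A : Set α} (hA : MeasurableSet A) (c : ℝ) :
    BddMeasurable (A.indicator fun _ => c) :=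
  ⟨measurable_const.indicator hA, |c|, fun x => norm_indicator_le_norm_self (fun _ => c) x⟩

lemma BddMeasurable.exists_tendstoUniformly_simpleFunc (hf : BddMeasurable f) :
    ∃ s : ℕ → SimpleFunc α ℝ, TendstoUniformly (fun k => s k) f atTop := by
  obtain ⟨hf, C, hC⟩ := hf
  let s (k : ℕ) : SimpleFunc α ℝ := SimpleFunc.map (fun m : ℤ => (m : ℝ) / (k + 1))
    { toFun x := ⌊f x * (k + 1)⌋
      measurableSet_fiber' m := (hf.mul_const _).floor (measurableSet_singleton m)
      finite_range' := by
        refine (finite_Icc ⌊-C * (k + 1)⌋ ⌊C * (k + 1)⌋).subset (range_subset_iff.2 fun x => ?_)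
        have hx := abs_le.1 (hC x)
        exact ⟨Int.floor_mono (by gcongr; exact hx.1), Int.floor_mono (by gcongr; exact hx.2)⟩ }
  have hs (k : ℕ) (x : α) : dist (f x) (s k x) ≤ 1 / (k + 1) := by
    have hk : (0 : ℝ) < k + 1 := by positivity
    change |f x - ⌊f x * (k + 1)⌋ / (k + 1)| ≤ _
    rw [← mul_le_mul_iff_of_pos_right hk, ← abs_of_pos hk, ← abs_mul, abs_of_pos hk, sub_mul,
      div_mul_cancel₀ _ hk.ne', div_mul_cancel₀ _ hk.ne', Int.self_sub_floor,
      abs_of_nonneg (Int.fract_nonneg _)]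
    exact (Int.fract_lt_one _).le
  refine ⟨s, Metric.tendstoUniformly_iff.2 fun ε hε => ?_⟩
  filter_upwards [tendsto_one_div_add_atTop_nhds_zero_nat.eventually (gt_mem_nhds hε)]
    with k hk x using (hs k x).trans_lt hk

lemma IsFAP.abs_fapInt_sub_simpleInt_le (hQ : IsFAP Q) {s : SimpleFunc α ℝ} {ε : ℝ}
    (hs : ∀ x, |f x - s x| ≤ ε) : |fapInt Q f - simpleInt Q s| ≤ ε := by
  have le_of_le (t : SimpleFunc α ℝ) (ht : ∀ x, t x ≤ f x) : simpleInt Q t ≤ simpleInt Q s + ε := by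
    rw [← hQ.simpleInt_const ε, ← hQ.simpleInt_add]
    refine hQ.simpleInt_mono fun x => ?_
    have := (abs_le.1 (hs x)).2
    change t x ≤ s x + ε
    linarith [ht x]
  have hlower (x : α) : (s + SimpleFunc.const α (-ε)) x ≤ f x := by
    have := (abs_le.1 (hs x)).1
    change s x + -ε ≤ f x
    linarith
  have hupper : fapInt Q f ≤ simpleInt Q s + ε :=
    csSup_le ⟨_, _, hlower, rfl⟩ (forall_mem_image.2 le_of_le)
  have hle : simpleInt Q s + -ε ≤ fapInt Q f := by
    rw [← hQ.simpleInt_const (-ε), ← hQ.simpleInt_add]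
    exact le_csSup ⟨_, forall_mem_image.2 le_of_le⟩ ⟨_, hlower, rfl⟩
  rw [abs_le]
  constructor <;> linarith

lemma tendstoUniformlyOn_simpleInt {s : ℕ → SimpleFunc α ℝ}
    (hs : TendstoUniformly (fun k => s k) f atTop) :
    TendstoUniformlyOn (fun k Q => simpleInt Q (s k)) (fun Q => fapInt Q f) atTop (FAPs α) := by
  refine Metric.tendstoUniformlyOn_iff.2 fun ε hε => ?_
  filter_upwards [Metric.tendstoUniformly_iff.1 hs (ε / 2) (half_pos hε)] with k hk Q hQ
  exact (IsFAP.abs_fapInt_sub_simpleInt_le hQ fun x => (hk x).le).trans_lt (half_lt_self hε)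

lemma IsFAP.tendsto_simpleInt (hQ : IsFAP Q) {s : ℕ → SimpleFunc α ℝ}
    (hs : TendstoUniformly (fun k => s k) f atTop) :
    Tendsto (fun k => simpleInt Q (s k)) atTop (𝓝 (fapInt Q f)) :=
  (tendstoUniformlyOn_simpleInt hs).tendsto_at hQ

lemma BddMeasurable.continuousOn_fapInt (hf : BddMeasurable f) :
    ContinuousOn (fun Q => fapInt Q f) (FAPs α) := by
  obtain ⟨s, hs⟩ := hf.exists_tendstoUniformly_simpleFunc
  exact (tendstoUniformlyOn_simpleInt hs).continuousOn
    (.of_forall fun k => (continuous_simpleInt (s k)).continuousOn)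

lemma IsFAP.fapInt_simpleFunc (hQ : IsFAP Q) (s : SimpleFunc α ℝ) :
    fapInt Q s = simpleInt Q s := by
  have h : |fapInt Q s - simpleInt Q s| ≤ 0 := hQ.abs_fapInt_sub_simpleInt_le fun x => by simp
  exact sub_eq_zero.1 (abs_nonpos_iff.1 h)

lemma IsFAP.fapInt_indicator_const (hQ : IsFAP Q) {A : Set α} (hA : MeasurableSet A) (c : ℝ) :
    fapInt Q (A.indicator fun _ => c) = mass Q A * c := by
  rw [← hQ.simpleInt_indicator hA, ← hQ.fapInt_simpleFunc]
  rfl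

lemma IsFAP.fapInt_add (hQ : IsFAP Q) (hf : BddMeasurable f) (hg : BddMeasurable g) :
    fapInt Q (f + g) = fapInt Q f + fapInt Q g := by
  obtain ⟨s, hs⟩ := hf.exists_tendstoUniformly_simpleFunc
  obtain ⟨t, ht⟩ := hg.exists_tendstoUniformly_simpleFunc
  refine tendsto_nhds_unique (hQ.tendsto_simpleInt (s := fun k => s k + t k) (hs.add ht)) ?_
  simpa only [hQ.simpleInt_add] using (hQ.tendsto_simpleInt hs).add (hQ.tendsto_simpleInt ht)

lemma IsFAP.fapInt_sum (hQ : IsFAP Q) {ι : Type*} (T : Finset ι) {f : ι → α → ℝ}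
    (hf : ∀ t, BddMeasurable (f t)) : fapInt Q (∑ t ∈ T, f t) = ∑ t ∈ T, fapInt Q (f t) := by
  classical
  induction T using Finset.induction_on with
  | empty => exact (hQ.fapInt_simpleFunc 0).trans (hQ.simpleInt_const 0)
  | insert t T ht ih =>
    rw [Finset.sum_insert ht, Finset.sum_insert ht, hQ.fapInt_add (hf t) (.sum fun t _ => hf t), ih]

lemma IsFAP.fapInt_mono (hQ : IsFAP Q) (hf : BddMeasurable f) (hg : BddMeasurable g)
    (hfg : f ≤ g) : fapInt Q f ≤ fapInt Q g := by
  obtain ⟨C, hC⟩ := hf.2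
  obtain ⟨D, hD⟩ := hg.2
  refine csSup_le_csSup ⟨D, forall_mem_image.2 fun s hs => ?_⟩
    ⟨_, SimpleFunc.const α (-C), fun x => (abs_le.1 (hC x)).1, rfl⟩
    (image_mono fun s hs x => (hs x).trans (hfg x))
  rw [← hQ.simpleInt_const D]
  exact hQ.simpleInt_mono fun x => (hs x).trans (abs_le.1 (hD x)).2

lemma IsFAP.fapInt_nonneg (hQ : IsFAP Q) (hf : BddMeasurable f) (hf₀ : 0 ≤ f) :
    0 ≤ fapInt Q f :=
  (hQ.simpleInt_const 0).symm.trans (hQ.fapInt_simpleFunc _).symm |>.trans_le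
    (hQ.fapInt_mono ⟨measurable_const, 0, by simp⟩ hf hf₀)

lemma IsFAP.fapInt_le_of_mass_eq_zero (hQ : IsFAP Q) (hf : BddMeasurable f)
    (hg : BddMeasurable g) {N : Set α} (hN : MeasurableSet N) (hQN : mass Q N = 0)
    (hfg : ∀ x ∉ N, f x ≤ g x) : fapInt Q f ≤ fapInt Q g := by
  obtain ⟨C, hC⟩ := hf.2
  obtain ⟨D, hD⟩ := hg.2
  have hind := bddMeasurable_indicator_const hN (C + D)
  calc fapInt Q f ≤ fapInt Q (g + N.indicator fun _ => C + D) := by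
        refine hQ.fapInt_mono hf (hg.add hind) fun x => ?_
        by_cases hx : x ∈ N
        · have := (abs_le.1 (hC x)).2
          have := (abs_le.1 (hD x)).1
          simp only [Pi.add_apply, indicator_of_mem hx]
          linarith
        · simpa [hx] using hfg x hx
    _ = fapInt Q g := by
        rw [hQ.fapInt_add hg hind, hQ.fapInt_indicator_const hN, hQN, zero_mul, add_zero]

lemma IsFAP.fapInt_congr_of_mass_eq_zero (hQ : IsFAP Q) (hf : BddMeasurable f)
    (hg : BddMeasurable g) {N : Set α} (hN : MeasurableSet N) (hQN : mass Q N = 0)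
    (hfg : ∀ x ∉ N, f x = g x) : fapInt Q f = fapInt Q g :=
  (hQ.fapInt_le_of_mass_eq_zero hf hg hN hQN fun x hx => (hfg x hx).le).antisymm
    (hQ.fapInt_le_of_mass_eq_zero hg hf hN hQN fun x hx => (hfg x hx).ge)

end BoundedIntegral

section AbsolutelyContinuous

variable {α : Type*} [MeasurableSpace α] {Q : MSet α → unitInterval} {f g : α → ℝ}

lemma bddMeasurable_toReal_inf_natCast {c : α → ℝ≥0∞} (hc : Measurable c) (k : ℕ) :
    BddMeasurable fun x => (c x ⊓ k).toReal := by
  refine ⟨(hc.inf_const _).ennreal_toReal, k, fun x => ?_⟩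
  rw [abs_of_nonneg toReal_nonneg]
  exact toReal_le_of_le_ofReal k.cast_nonneg (by simp)

lemma IsFAP.fapIntTop_congr_of_mass_eq_zero (hQ : IsFAP Q) {c c' : α → ℝ≥0∞} (hc : Measurable c)
    (hc' : Measurable c') {N : Set α} (hN : MeasurableSet N) (hQN : mass Q N = 0)
    (hcc' : ∀ x ∉ N, c x = c' x) : fapIntTop Q c = fapIntTop Q c' := by
  refine iSup_congr fun k => congrArg _ ?_
  exact hQ.fapInt_congr_of_mass_eq_zero (bddMeasurable_toReal_inf_natCast hc k)
    (bddMeasurable_toReal_inf_natCast hc' k) hN hQN fun x hx => by rw [hcc' x hx]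

lemma IsFAP.fapIntTop_ofReal (hQ : IsFAP Q) (hg : BddMeasurable g) (hg₀ : 0 ≤ g) :
    fapIntTop Q (fun x => ENNReal.ofReal (g x)) = ENNReal.ofReal (fapInt Q g) := by
  have htrunc (k : ℕ) := bddMeasurable_toReal_inf_natCast hg.1.ennreal_ofReal k
  refine le_antisymm (iSup_le fun k => ofReal_le_ofReal ?_) ?_
  · refine hQ.fapInt_mono (htrunc k) hg fun x => ?_
    exact toReal_le_of_le_ofReal (hg₀ x) inf_le_left
  · obtain ⟨C, hC⟩ := hg.2
    obtain ⟨k, hk⟩ := exists_nat_ge C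
    refine le_iSup_of_le k (ofReal_le_ofReal (hQ.fapInt_mono hg (htrunc k) fun x => ?_))
    have hgk : ENNReal.ofReal (g x) ≤ k :=
      ofReal_le_of_le_toReal (((le_abs_self _).trans (hC x)).trans (by simpa using hk))
    simp [inf_eq_left.2 hgk, toReal_ofReal (hg₀ x)]

lemma BddMeasurable.posPart (hf : BddMeasurable f) : BddMeasurable f⁺ := by
  obtain ⟨C, hC⟩ := hf.2
  refine ⟨hf.1.sup_const 0, C, fun x => ?_⟩
  rw [Pi.posPart_apply, abs_of_nonneg (posPart_nonneg _)]
  exact (sup_le (le_abs_self _) (abs_nonneg _)).trans (hC x)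

lemma BddMeasurable.neg (hf : BddMeasurable f) : BddMeasurable (-f) :=
  ⟨hf.1.neg, hf.2.imp fun _ hC x => (abs_neg (f x)).trans_le (hC x)⟩

lemma IsFAP.fapIntTop_ofReal_eq_posPart (hQ : IsFAP Q) (hg : BddMeasurable g) :
    fapIntTop Q (fun x => ENNReal.ofReal (g x)) = ENNReal.ofReal (fapInt Q g⁺) := by
  rw [← hQ.fapIntTop_ofReal hg.posPart (posPart_nonneg g)]
  simp [posPart_def]

lemma IsFAP.fapIntR_eq_fapInt (hQ : IsFAP Q) (hg : BddMeasurable g) :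
    fapIntR Q g = fapInt Q g := by
  have hneg : fapIntTop Q (fun x => ENNReal.ofReal (-g x)) = ENNReal.ofReal (fapInt Q g⁻) := by
    simpa [posPart_neg] using hQ.fapIntTop_ofReal_eq_posPart hg.neg
  have hg' : BddMeasurable g⁻ := by simpa [posPart_neg] using hg.neg.posPart
  have hsplit : fapInt Q g⁺ = fapInt Q g + fapInt Q g⁻ := by
    rw [← hQ.fapInt_add hg hg', ← sub_eq_iff_eq_add.1 (posPart_sub_negPart g)]
  rw [fapIntR, hQ.fapIntTop_ofReal_eq_posPart hg, hneg,
    toReal_ofReal (hQ.fapInt_nonneg hg.posPart (posPart_nonneg g)),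
    toReal_ofReal (hQ.fapInt_nonneg hg' (negPart_nonneg g)), hsplit, add_sub_cancel_right]

variable {ν : Measure α}

/-- The finitely additive probabilities absolutely continuous with respect to a measure `ν`. -/
def acFAPs (ν : Measure α) : Set (MSet α → unitInterval) :=
  {Q | IsFAP Q ∧ ∀ A : MSet α, ν A.1 = 0 → (Q A : ℝ) = 0}

lemma isClosed_acFAPs (ν : Measure α) : IsClosed (acFAPs ν) := by
  simp only [acFAPs, IsFAP, ofPred_and, ofPred_forall]
  refine .inter (.inter (isClosed_eq (by fun_prop) continuous_const) ?_) ?_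
  · exact isClosed_iInter fun A => isClosed_iInter fun B => isClosed_iInter fun _ =>
      isClosed_eq (by fun_prop) (by fun_prop)
  · exact isClosed_iInter fun A => isClosed_iInter fun _ =>
      isClosed_eq (by fun_prop) continuous_const

lemma mass_setOf_ne_eq_zero (hQ : Q ∈ acFAPs ν) (hf : Measurable f) (hg : Measurable g)
    (hfg : f =ᵐ[ν] g) : mass Q {x | f x ≠ g x} = 0 :=
  (mass_coe Q ⟨_, (measurableSet_eq_fun hf hg).compl⟩).trans (hQ.2 _ hfg)

lemma fapIntTop_ofReal_congr_ae (hQ : Q ∈ acFAPs ν) (hf : Measurable f) (hg : Measurable g)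
    (hfg : f =ᵐ[ν] g) :
    fapIntTop Q (fun x => ENNReal.ofReal (f x)) = fapIntTop Q fun x => ENNReal.ofReal (g x) :=
  hQ.1.fapIntTop_congr_of_mass_eq_zero hf.ennreal_ofReal hg.ennreal_ofReal
    (measurableSet_eq_fun hf hg).compl (mass_setOf_ne_eq_zero hQ hf hg hfg)
    fun _ hx => congrArg _ (not_not.1 hx)

lemma fapIntR_congr_ae (hQ : Q ∈ acFAPs ν) (hf : Measurable f) (hg : Measurable g)
    (hfg : f =ᵐ[ν] g) : fapIntR Q f = fapIntR Q g := by
  have hneg := fapIntTop_ofReal_congr_ae hQ hf.neg hg.neg hfg.neg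
  simp only [Pi.neg_apply] at hneg
  rw [fapIntR, fapIntR, fapIntTop_ofReal_congr_ae hQ hf hg hfg, hneg]

lemma exists_bddMeasurable_ae_eq (hf : Measurable f) (hfν : MemLp f ∞ ν) :
    ∃ g, BddMeasurable g ∧ f =ᵐ[ν] g := by
  set C := (eLpNormEssSup f ν).toReal
  have hfC : ∀ᵐ x ∂ν, |f x| ≤ C := by
    filter_upwards [enorm_ae_le_eLpNormEssSup f ν] with x hx
    simpa using toReal_mono (eLpNorm_exponent_top (f := f) ▸ hfν.eLpNorm_ne_top) hx
  refine ⟨{x | |f x| ≤ C}.indicator f, ⟨hf.indicator (measurableSet_le hf.abs measurable_const), C,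
    fun x => ?_⟩, ?_⟩
  · by_cases hx : |f x| ≤ C <;> simp [indicator, hx, C]
  · filter_upwards [hfC] with x hx
    exact (indicator_of_mem (s := {x | |f x| ≤ C}) hx f).symm

lemma exists_bddMeasurable_fapIntR_eq (hf : Measurable f) (hfν : MemLp f ∞ ν) :
    ∃ g, BddMeasurable g ∧ f =ᵐ[ν] g ∧ ∀ Q ∈ acFAPs ν, fapIntR Q f = fapInt Q g := by
  obtain ⟨g, hg, hfg⟩ := exists_bddMeasurable_ae_eq hf hfν
  exact ⟨g, hg, hfg, fun Q hQ =>
    (fapIntR_congr_ae hQ hf hg.1 hfg).trans (hQ.1.fapIntR_eq_fapInt hg)⟩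

lemma fapIntegrable_of_memLp_top (hQ : Q ∈ acFAPs ν) (hf : Measurable f) (hfν : MemLp f ∞ ν) :
    FapIntegrable Q f := by
  have habs : Measurable fun x => |f x| := hf.abs
  obtain ⟨g, hg, hfg⟩ := exists_bddMeasurable_ae_eq habs hfν.abs
  rw [FapIntegrable, fapIntTop_ofReal_congr_ae hQ habs hg.1 hfg,
    hQ.1.fapIntTop_ofReal_eq_posPart hg]
  exact ofReal_lt_top

end AbsolutelyContinuous

section Convexity

variable {α : Type*} [MeasurableSpace α] {P Q R : MSet α → unitInterval} {a b : ℝ} {f : α → ℝ}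

/-- A `[0,1]`-valued set function as a point of the real vector space of set functions, where
convexity makes sense. -/
def toRealFun (Q : MSet α → unitInterval) (A : MSet α) : ℝ := Q A

lemma continuous_toRealFun : Continuous (toRealFun (α := α)) := by
  unfold toRealFun
  fun_prop

lemma isFAP_of_toRealFun_eq (hP : IsFAP P) (hQ : IsFAP Q) (hab : a + b = 1)
    (hR : toRealFun R = a • toRealFun P + b • toRealFun Q) : IsFAP R := by
  have hR' (A : MSet α) : (R A : ℝ) = a * P A + b * Q A := congrFun hR A
  refine ⟨by rw [hR', hP.1, hQ.1, mul_one, mul_one, hab], fun A B hAB => ?_⟩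
  rw [hR', hR', hR', hP.2 A B hAB, hQ.2 A B hAB]
  ring

lemma simpleInt_of_toRealFun_eq (hR : toRealFun R = a • toRealFun P + b • toRealFun Q)
    (s : SimpleFunc α ℝ) : simpleInt R s = a * simpleInt P s + b * simpleInt Q s := by
  have hR' (A : MSet α) : (R A : ℝ) = a * P A + b * Q A := congrFun hR A
  simp only [simpleInt, Finset.mul_sum, ← Finset.sum_add_distrib, hR']
  exact Finset.sum_congr rfl fun y _ => by ring

lemma fapInt_of_toRealFun_eq (hP : IsFAP P) (hQ : IsFAP Q) (hab : a + b = 1)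
    (hR : toRealFun R = a • toRealFun P + b • toRealFun Q) (hf : BddMeasurable f) :
    fapInt R f = a * fapInt P f + b * fapInt Q f := by
  obtain ⟨s, hs⟩ := hf.exists_tendstoUniformly_simpleFunc
  refine tendsto_nhds_unique ((isFAP_of_toRealFun_eq hP hQ hab hR).tendsto_simpleInt hs) ?_
  simp only [simpleInt_of_toRealFun_eq hR]
  exact ((hP.tendsto_simpleInt hs).const_mul a).add ((hQ.tendsto_simpleInt hs).const_mul b)

end Convexity

section Annihilating

variable {α : Type*} [MeasurableSpace α] {ν : Measure α} {F : Set (α → ℝ)}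

/-- The finitely additive probabilities absolutely continuous with respect to `ν` under which every
function in `F` has integral `0`. Taking for `F` suitable martingale differences gives the set `𝒰`
of the theorem. -/
def annihilatingFAPs (ν : Measure α) (F : Set (α → ℝ)) : Set (MSet α → unitInterval) :=
  {Q ∈ acFAPs ν | ∀ f ∈ F, fapIntR Q f = 0}

lemma isCompact_annihilatingFAPs (hF : ∀ f ∈ F, Measurable f ∧ MemLp f ∞ ν) :
    IsCompact (annihilatingFAPs ν F) := by
  have hclosed (f : α → ℝ) (hf : f ∈ F) : IsClosed {Q ∈ acFAPs ν | fapIntR Q f = 0} := by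
    obtain ⟨g, hg, -, hfg⟩ := exists_bddMeasurable_fapIntR_eq (hF f hf).1 (hF f hf).2
    have hcont : ContinuousOn (fun Q => fapIntR Q f) (acFAPs ν) :=
      (hg.continuousOn_fapInt.mono fun Q hQ => hQ.1).congr hfg
    exact hcont.preimage_isClosed_of_isClosed (isClosed_acFAPs ν) isClosed_singleton
  have hinter : annihilatingFAPs ν F =
      acFAPs ν ∩ ⋂ f ∈ F, {Q ∈ acFAPs ν | fapIntR Q f = 0} := by
    ext Q
    simp +contextual [annihilatingFAPs]
  rw [hinter]
  exact ((isClosed_acFAPs ν).inter (isClosed_biInter hclosed)).isCompact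

lemma convex_image_toRealFun_annihilatingFAPs (hF : ∀ f ∈ F, Measurable f ∧ MemLp f ∞ ν) :
    Convex ℝ (toRealFun '' annihilatingFAPs ν F) := by
  rintro _ ⟨P, hP, rfl⟩ _ ⟨Q, hQ, rfl⟩ a b ha hb hab
  let R (A : MSet α) : unitInterval :=
    ⟨a • (P A : ℝ) + b • (Q A : ℝ), convex_Icc 0 1 (P A).2 (Q A).2 ha hb hab⟩
  have hR : toRealFun R = a • toRealFun P + b • toRealFun Q := rfl
  have hRν : R ∈ acFAPs ν :=
    ⟨isFAP_of_toRealFun_eq hP.1.1 hQ.1.1 hab hR, fun A hA => by simp [R, hP.1.2 A hA, hQ.1.2 A hA]⟩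
  refine ⟨R, ⟨hRν, fun f hf => ?_⟩, hR⟩
  obtain ⟨g, hg, -, hfg⟩ := exists_bddMeasurable_fapIntR_eq (hF f hf).1 (hF f hf).2
  rw [hfg R hRν, fapInt_of_toRealFun_eq hP.1.1 hQ.1.1 hab hR hg, ← hfg P hP.1, ← hfg Q hQ.1,
    hP.2 f hf, hQ.2 f hf, mul_zero, mul_zero, add_zero]

end Annihilating

section OfMeasure

variable {α : Type*} [MeasurableSpace α] {ν P : Measure α} [IsProbabilityMeasure P] {f : α → ℝ}

/-- A probability measure regarded as a finitely additive probability. -/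
noncomputable def ofMeasure (P : Measure α) [IsProbabilityMeasure P] : MSet α → unitInterval :=
  fun A => ⟨P.real A, measureReal_nonneg, measureReal_le_one⟩

lemma isFAP_ofMeasure (P : Measure α) [IsProbabilityMeasure P] : IsFAP (ofMeasure P) :=
  ⟨probReal_univ, fun _ B hAB => measureReal_union hAB B.2⟩

lemma ofMeasure_mem_acFAPs_iff : ofMeasure P ∈ acFAPs ν ↔ P ≪ ν := by
  refine ⟨fun hP => .mk fun A hA hνA => ?_, fun hP => ⟨isFAP_ofMeasure P, fun A hA => ?_⟩⟩
  · exact (measureReal_eq_zero_iff).1 (hP.2 ⟨A, hA⟩ hνA)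
  · exact (measureReal_eq_zero_iff).2 (hP hA)

lemma simpleInt_ofMeasure (s : SimpleFunc α ℝ) : simpleInt (ofMeasure P) s = ∫ x, s x ∂P := by
  rw [← SimpleFunc.integral_eq_integral _ (s.integrable_of_isFiniteMeasure), SimpleFunc.integral_eq]
  exact Finset.sum_congr rfl fun y _ => mul_comm _ _

lemma fapInt_ofMeasure (hf : BddMeasurable f) : fapInt (ofMeasure P) f = ∫ x, f x ∂P := by
  obtain ⟨s, hs⟩ := hf.exists_tendstoUniformly_simpleFunc
  refine tendsto_nhds_unique ((isFAP_ofMeasure P).tendsto_simpleInt hs) ?_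
  simp only [simpleInt_ofMeasure]
  obtain ⟨C, hC⟩ := hf.2
  refine tendsto_integral_filter_of_norm_le_const
    (.of_forall fun k => (s k).measurable.aestronglyMeasurable) ⟨C + 1, ?_⟩
    (.of_forall fun x => hs.tendsto_at x)
  filter_upwards [Metric.tendstoUniformly_iff.1 hs 1 one_pos] with k hk
  refine .of_forall fun x => (norm_le_norm_add_norm_sub (f x) (s k x)).trans ?_
  exact add_le_add (hC x) (hk x).le

lemma fapIntR_ofMeasure (hPν : P ≪ ν) (hf : Measurable f) (hfν : MemLp f ∞ ν) :
    fapIntR (ofMeasure P) f = ∫ x, f x ∂P := by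
  obtain ⟨g, hg, hfg, hfapInt⟩ := exists_bddMeasurable_fapIntR_eq hf hfν
  rw [hfapInt _ (ofMeasure_mem_acFAPs_iff.2 hPν), fapInt_ofMeasure hg,
    integral_congr_ae (hPν.ae_eq hfg)]

lemma ofMeasure_mem_annihilatingFAPs_iff {F : Set (α → ℝ)}
    (hF : ∀ f ∈ F, Measurable f ∧ MemLp f ∞ ν) :
    ofMeasure P ∈ annihilatingFAPs ν F ↔ P ≪ ν ∧ ∀ f ∈ F, ∫ x, f x ∂P = 0 := by
  rw [← ofMeasure_mem_acFAPs_iff]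
  refine and_congr_right fun hP => forall₂_congr fun f hf => ?_
  rw [fapIntR_ofMeasure (ofMeasure_mem_acFAPs_iff.1 hP) (hF f hf).1 (hF f hf).2]

end OfMeasure

section Duality

open Finsupp (linearCombination)

lemma exists_forall_eq_linearCombination {ι : Type*} (φ : (ι → ℝ) →L[ℝ] ℝ) :
    ∃ c : ι →₀ ℝ, ∀ y, φ y = linearCombination ℝ y c := by
  have hφ : φ.toLinearMap ∈
      Submodule.span ℝ (range (LinearMap.proj (R := ℝ) (φ := fun _ : ι => ℝ))) :=
    (LinearMap.mem_span_iff_continuous _).2 φ.continuous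
  obtain ⟨c, hc⟩ := (Finsupp.mem_span_range_iff_exists_finsupp).1 hφ
  refine ⟨c, fun y => ?_⟩
  rw [← ContinuousLinearMap.coe_coe, ← hc, Finsupp.linearCombination_apply, Finsupp.sum,
    LinearMap.sum_apply]
  rfl

lemma mem_of_forall_exists_linearCombination_lt {ι : Type*} {K : Set (ι → ℝ)} (hK : Convex ℝ K)
    (hKc : IsClosed K) {b : ι → ℝ}
    (hb : ∀ (c : ι →₀ ℝ) (u : ℝ), linearCombination ℝ b c < u →
      ∃ y ∈ K, linearCombination ℝ y c < u) : b ∈ K := by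
  by_contra hbK
  obtain ⟨φ, u, hφb, hφK⟩ := geometric_hahn_banach_point_closed hK hKc hbK
  obtain ⟨c, hc⟩ := exists_forall_eq_linearCombination φ
  obtain ⟨y, hyK, hy⟩ := hb c u (hc b ▸ hφb)
  exact (hφK y hyK).not_gt (hc y ▸ hy)

lemma sum_sum_split {ι M N : Type*} {κ : ι → Type*} [Fintype ι] [Zero M] [AddCommMonoid N]
    (c : (Σ i, κ i) →₀ M) (h : (Σ i, κ i) → M → N) :
    ∑ i, (c.split i).sum (fun k => h ⟨i, k⟩) = c.sum h := by
  rw [Finsupp.sigma_sum]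
  refine (Finset.sum_subset (Finset.subset_univ _) fun i _ hi => ?_).symm
  rw [not_not.1 (mt (Finsupp.mem_splitSupport_iff_nonzero c i).2 hi), Finsupp.sum_zero_index]

variable {α : Type*} [MeasurableSpace α]

lemma bddMeasurable_sum_indicator {ι : Type*} (c : ι →₀ ℝ) {A : ι → Set α}
    (hA : ∀ t, MeasurableSet (A t)) :
    BddMeasurable (c.sum fun t r => (A t).indicator fun _ => r) :=
  .sum fun t _ => bddMeasurable_indicator_const (hA t) (c t)

lemma IsFAP.fapInt_sum_indicator {Q : MSet α → unitInterval} (hQ : IsFAP Q) {ι : Type*}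
    (c : ι →₀ ℝ) (A : ι → MSet α) :
    fapInt Q (c.sum fun t r => (A t : Set α).indicator fun _ => r) =
      linearCombination ℝ (fun t => (Q (A t) : ℝ)) c := by
  rw [Finsupp.sum, hQ.fapInt_sum _ fun t => bddMeasurable_indicator_const (A t).2 (c t)]
  refine Finset.sum_congr rfl fun t _ => ?_
  rw [hQ.fapInt_indicator_const (A t).2, mass_coe, mul_comm]
  rfl

variable {n : ℕ} {Ω : Fin n → Type*} [∀ i, MeasurableSpace (Ω i)]

/-- The measurable cylinder `π_i⁻¹(B)` over a set `B ∈ 𝒜_i`. -/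
def cylinderSet (p : Σ i, MSet (Ω i)) : MSet (∀ i, Ω i) :=
  ⟨(fun ω => ω p.1) ⁻¹' p.2, measurable_pi_apply p.1 p.2.2⟩

lemma mem_couplings_iff {μ : ∀ i, Measure (Ω i)} {Q : MSet (∀ i, Ω i) → unitInterval} :
    Q ∈ couplings μ ↔ IsFAP Q ∧ ∀ p : Σ i, MSet (Ω i), (Q (cylinderSet p) : ℝ) = (μ p.1).real p.2 :=
  and_congr_right fun _ => ⟨fun h p => h p.1 p.2 p.2.2, fun h i B hB => h ⟨i, B, hB⟩⟩

variable {μ : ∀ i, Measure (Ω i)} [∀ i, IsProbabilityMeasure (μ i)]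
  {U : Set (MSet (∀ i, Ω i) → unitInterval)}

lemma exists_linearCombination_cylinderSet_lt (hU : U ⊆ FAPs _) (hμU : DualCond μ U)
    (c : (Σ i, MSet (Ω i)) →₀ ℝ) {u : ℝ}
    (hu : linearCombination ℝ (fun p => (μ p.1).real p.2) c < u) :
    ∃ Q ∈ U, linearCombination ℝ (fun p => (Q (cylinderSet p) : ℝ)) c < u := by
  let f (i : Fin n) : Ω i → ℝ := (c.split i).sum fun B r => (B : Set (Ω i)).indicator fun _ => r
  have hf (i : Fin n) : BddMeasurable (f i) := bddMeasurable_sum_indicator _ fun B => B.2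
  have hint : ∑ i, ∫ x, f i x ∂μ i = linearCombination ℝ (fun p => (μ p.1).real p.2) c := by
    rw [Finsupp.linearCombination_apply, ← sum_sum_split]
    refine Finset.sum_congr rfl fun i _ => ?_
    rw [← fapInt_ofMeasure (hf i)]
    exact (isFAP_ofMeasure (μ i)).fapInt_sum_indicator (c.split i) id
  have hsum : (fun ω : ∀ i, Ω i => ∑ i, f i (ω i)) =
      c.sum fun p r => (cylinderSet p : Set (∀ i, Ω i)).indicator fun _ => r := by
    ext ω
    rw [Finsupp.sum_apply', ← sum_sum_split]
    exact Finset.sum_congr rfl fun i _ => Finsupp.sum_apply' _ _ _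
  have hlt := (hμU f (fun i => (hf i).1) fun i => (hf i).2).trans_lt
    (EReal.coe_lt_coe_iff.2 (hint.trans_lt hu))
  simp only [iInf_lt_iff] at hlt
  obtain ⟨Q, hQU, hQ⟩ := hlt
  refine ⟨Q, hQU, ?_⟩
  rwa [hsum, IsFAP.fapInt_sum_indicator (hU hQU) c cylinderSet, EReal.coe_lt_coe_iff] at hQ

lemma inter_couplings_nonempty_of_dualCond (hU : U ⊆ FAPs _) (hUc : IsCompact U)
    (hUconv : Convex ℝ (toRealFun '' U)) (hμU : DualCond μ U) : (U ∩ couplings μ).Nonempty := by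
  let marginals := LinearMap.funLeft ℝ ℝ (cylinderSet (Ω := Ω))
  have hcont : Continuous marginals := continuous_pi fun p => continuous_apply (cylinderSet p)
  have hmem : (fun p : Σ i, MSet (Ω i) => (μ p.1).real p.2) ∈ marginals '' (toRealFun '' U) := by
    refine mem_of_forall_exists_linearCombination_lt (hUconv.linear_image marginals)
      ((hUc.image continuous_toRealFun).image hcont).isClosed fun c u hu => ?_
    obtain ⟨Q, hQU, hQ⟩ := exists_linearCombination_cylinderSet_lt hU hμU c hu
    exact ⟨_, mem_image_of_mem _ (mem_image_of_mem _ hQU), hQ⟩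
  obtain ⟨_, ⟨Q, hQU, rfl⟩, hQ⟩ := hmem
  exact ⟨Q, hQU, mem_couplings_iff.2 ⟨hU hQU, congrFun hQ⟩⟩

end Duality

section SigmaAdditivity

lemma exists_ofMeasure_eq_of_tendsto_zero {α : Type*} [MeasurableSpace α]
    {Q : MSet α → unitInterval} (hQ : IsFAP Q)
    (hcont : ∀ A : ℕ → Set α, (∀ k, MeasurableSet (A k)) → Antitone A → ⋂ k, A k = ∅ →
      Tendsto (fun k => mass Q (A k)) atTop (𝓝 0)) :
    ∃ (P : Measure α) (_ : IsProbabilityMeasure P), ofMeasure P = Q := by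
  have hring : IsSetRing {A : Set α | MeasurableSet A} :=
    ⟨.empty, fun _ _ => .union, fun _ _ => .diff⟩
  let m : AddContent ℝ≥0∞ {A : Set α | MeasurableSet A} :=
    hring.addContent_of_union (fun A => ENNReal.ofReal (mass Q A)) (by simp [hQ.mass_empty])
      fun hA hB hAB => by
        rw [hQ.mass_union hA hB hAB, ofReal_add (mass_nonneg _ _) (mass_nonneg _ _)]
  have hm_iUnion := addContent_iUnion_eq_sum_of_tendsto_zero hring m (fun A _ => ofReal_ne_top)
    fun A hA hanti hempty => by
      simpa only [ofReal_zero] using! ENNReal.tendsto_ofReal (hcont A hA hanti hempty)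
  let P : Measure α := .ofMeasurable (fun A _ => m A) (by simp)
    fun A hA hdisj => hm_iUnion hA (.iUnion hA) hdisj
  have hP (A : Set α) (hA : MeasurableSet A) : P A = ENNReal.ofReal (mass Q A) :=
    Measure.ofMeasurable_apply A hA
  refine ⟨P, ⟨by rw [hP _ .univ, hQ.mass_univ, ofReal_one]⟩, funext fun A => Subtype.ext ?_⟩
  change (P A).toReal = _
  rw [hP _ A.2, toReal_ofReal (mass_nonneg _ _), mass_coe]

lemma exists_finset_measureReal_compl_lt {α : Type*} [MeasurableSpace α]
    [MeasurableSingletonClass α] (μ : Measure α) [IsFiniteMeasure μ] {S : Set α}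
    (hS : S.Countable) (hμS : μ Sᶜ = 0) {ε : ℝ} (hε : 0 < ε) :
    ∃ G : Finset α, μ.real (G : Set α)ᶜ < ε := by
  classical
  have := hS.to_subtype
  let G (T : Finset S) : Finset α := T.image (↑)
  have hinter : μ (⋂ T, (G T : Set α)ᶜ) = 0 := by
    refine measure_mono_null (t := Sᶜ) (fun x hx hxS => ?_) hμS
    exact mem_iInter.1 hx {⟨x, hxS⟩} (by simp [G])
  have htendsto : Tendsto (fun T => μ (G T : Set α)ᶜ) atTop (𝓝 0) :=
    hinter ▸ tendsto_measure_iInter_atTop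
      (fun T => (G T).measurableSet.compl.nullMeasurableSet)
      (fun T T' hT => compl_subset_compl.2 (Finset.coe_subset.2 (Finset.image_subset_image hT)))
      ⟨∅, measure_ne_top _ _⟩
  obtain ⟨T, hT⟩ := (htendsto.eventually (gt_mem_nhds (ofReal_pos.2 hε))).exists
  exact ⟨G T, (lt_ofReal_iff_toReal_lt (measure_ne_top _ _)).1 hT⟩

variable {n : ℕ} {Ω : Fin n → Type*} [∀ i, MeasurableSpace (Ω i)] {μ : ∀ i, Measure (Ω i)}
  {Q : MSet (∀ i, Ω i) → unitInterval} (i₀ : Fin n)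

lemma mass_preimage_eval (hQ : Q ∈ couplings μ) {i : Fin n} {B : Set (Ω i)}
    (hB : MeasurableSet B) : mass Q ((fun ω => ω i) ⁻¹' B) = (μ i).real B :=
  (mass_coe Q (cylinderSet ⟨i, B, hB⟩)).trans ((mem_couplings_iff.1 hQ).2 ⟨i, B, hB⟩)

open Function (update)

lemma tendsto_measureReal_preimage_update (m : Measure (Ω i₀)) [IsFiniteMeasure m]
    {A : ℕ → Set (∀ i, Ω i)} (hA : ∀ k, MeasurableSet (A k))
    (hanti : Antitone A) (hempty : ⋂ k, A k = ∅) (x : ∀ i, Ω i) :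
    Tendsto (fun k => m.real (update x i₀ ⁻¹' A k)) atTop (𝓝 0) := by
  have htendsto := tendsto_measure_iInter_atTop (μ := m)
    (fun k => (measurable_update x (hA k)).nullMeasurableSet)
    (fun k l hkl => preimage_mono (hanti hkl)) ⟨0, measure_ne_top _ _⟩
  rw [← preimage_iInter, hempty, preimage_empty, measure_empty] at htendsto
  exact (ENNReal.tendsto_toReal zero_ne_top).comp htendsto

variable [∀ i, MeasurableSingletonClass (Ω i)]

-- Off the cylinders `π_i⁻¹ (G i)ᶜ` only finitely many lines parallel to the `i₀`-axis remain.
lemma mass_le_sum_add_sum_update (hQ : Q ∈ couplings μ) {A : Set (∀ i, Ω i)} (hA : MeasurableSet A)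
    (G : ∀ i, Finset (Ω i)) (p : Ω i₀) :
    mass Q A ≤ ∑ i ∈ Finset.univ.erase i₀, (μ i).real (G i : Set (Ω i))ᶜ +
      ∑ x ∈ Fintype.piFinset (update G i₀ {p}), (μ i₀).real (update x i₀ ⁻¹' A) := by
  let X := Fintype.piFinset (update G i₀ {p})
  let off (i : Fin n) : Set (∀ i, Ω i) := (fun ω => ω i) ⁻¹' (G i : Set (Ω i))ᶜ
  let line (x : ∀ i, Ω i) : Set (∀ i, Ω i) := (fun ω => ω i₀) ⁻¹' (update x i₀ ⁻¹' A)
  have hsection (x : ∀ i, Ω i) : MeasurableSet (update x i₀ ⁻¹' A) := measurable_update x hA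
  have hoff (i : Fin n) : MeasurableSet (off i) := measurable_pi_apply i (G i).measurableSet.compl
  have hline (x : ∀ i, Ω i) : MeasurableSet (line x) := measurable_pi_apply i₀ (hsection x)
  have hcover : A ⊆ (⋃ i ∈ Finset.univ.erase i₀, off i) ∪ ⋃ x ∈ X, line x := by
    intro ω hω
    by_cases hωG : ∃ i ≠ i₀, ω i ∉ G i
    · obtain ⟨i, hi, hωi⟩ := hωG
      exact .inl (mem_biUnion (Finset.mem_erase.2 ⟨hi, Finset.mem_univ i⟩) hωi)
    · push Not at hωG
      refine .inr (mem_biUnion (x := update ω i₀ p) (Fintype.mem_piFinset.2 fun i => ?_) ?_)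
      · obtain rfl | hi := eq_or_ne i i₀
        · simp
        · simpa [hi] using hωG i hi
      · simpa [line] using hω
  have hUoff := (Finset.univ.erase i₀).measurableSet_biUnion fun i _ => hoff i
  have hUline := X.measurableSet_biUnion fun x _ => hline x
  calc mass Q A ≤ mass Q (⋃ i ∈ Finset.univ.erase i₀, off i) + mass Q (⋃ x ∈ X, line x) :=
        (hQ.1.mass_mono hA (hUoff.union hUline) hcover).trans (hQ.1.mass_union_le hUoff hUline)
    _ ≤ ∑ i ∈ Finset.univ.erase i₀, mass Q (off i) + ∑ x ∈ X, mass Q (line x) :=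
        add_le_add (hQ.1.mass_biUnion_le _ hoff) (hQ.1.mass_biUnion_le _ hline)
    _ = _ := by
        simp only [off, line, mass_preimage_eval hQ (Finset.measurableSet _).compl,
          mass_preimage_eval hQ (hsection _), X]

lemma exists_ofMeasure_eq_of_mem_couplings [∀ i, IsProbabilityMeasure (μ i)]
    (hQ : Q ∈ couplings μ)
    (hdisc : ∀ i ≠ i₀, ∃ S : Set (Ω i), S.Countable ∧ μ i Sᶜ = 0) :
    ∃ (P : Measure (∀ i, Ω i)) (_ : IsProbabilityMeasure P), ofMeasure P = Q := by
  refine exists_ofMeasure_eq_of_tendsto_zero hQ.1 fun A hA hanti hempty => ?_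
  obtain ⟨p⟩ := (μ i₀).nonempty_of_neZero
  refine tendsto_order.2 ⟨fun a ha => .of_forall fun k => ha.trans_le (mass_nonneg _ _),
    fun ε hε => ?_⟩
  have hn : (0 : ℝ) < n := Nat.cast_pos.2 i₀.pos
  have hsmall (i : Fin n) (hi : i ≠ i₀) :
      ∃ G : Finset (Ω i), (μ i).real (G : Set (Ω i))ᶜ < ε / 2 / n :=
    let ⟨_, hS, hμS⟩ := hdisc i hi
    exists_finset_measureReal_compl_lt (μ i) hS hμS (by positivity)
  choose! G hG using hsmall
  have hoff : ∑ i ∈ Finset.univ.erase i₀, (μ i).real (G i : Set (Ω i))ᶜ ≤ ε / 2 :=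
    calc _ ≤ ∑ i ∈ Finset.univ.erase i₀, ε / 2 / n :=
          Finset.sum_le_sum fun i hi => (hG i (Finset.ne_of_mem_erase hi)).le
      _ ≤ ∑ i : Fin n, ε / 2 / n :=
          Finset.sum_le_univ_sum_of_nonneg fun _ => by positivity
      _ = ε / 2 := by simp [field]
  have hlines := tendsto_finsetSum (Fintype.piFinset (update G i₀ {p})) fun x _ =>
    tendsto_measureReal_preimage_update i₀ (μ i₀) hA hanti hempty x
  rw [Finset.sum_const_zero] at hlines
  filter_upwards [hlines.eventually (gt_mem_nhds (half_pos hε))] with k hk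
  linarith [mass_le_sum_add_sum_update i₀ hQ (hA k) G p]

end SigmaAdditivity

section AnnihilatingMeasures

variable {n : ℕ} {Ω : Fin n → Type*} [∀ i, MeasurableSpace (Ω i)] {μ : ∀ i, Measure (Ω i)}

lemma map_eval_eq_of_ofMeasure_mem_couplings [∀ i, IsFiniteMeasure (μ i)]
    {P : Measure (∀ i, Ω i)} [IsProbabilityMeasure P] (hP : ofMeasure P ∈ couplings μ) (i : Fin n) :
    P.map (fun ω => ω i) = μ i := by
  ext B hB
  rw [Measure.map_apply (measurable_pi_apply i) hB]
  exact (measureReal_eq_measureReal_iff).1 (hP.2 i B hB)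

lemma dualCond_of_ofMeasure_mem {P : Measure (∀ i, Ω i)} [IsProbabilityMeasure P]
    (hP : ∀ i, P.map (fun ω => ω i) = μ i) {U : Set (MSet (∀ i, Ω i) → unitInterval)}
    (hPU : ofMeasure P ∈ U) : DualCond μ U := by
  intro f hf hfb
  have hbdd (i : Fin n) : BddMeasurable fun ω : ∀ i, Ω i => f i (ω i) :=
    BddMeasurable.comp ⟨hf i, hfb i⟩ (measurable_pi_apply i)
  have hint : fapInt (ofMeasure P) (fun ω => ∑ i, f i (ω i)) = ∑ i, ∫ x, f i x ∂μ i := by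
    have hsum : BddMeasurable fun ω : ∀ i, Ω i => ∑ i, f i (ω i) := by
      simpa only [Finset.sum_fn] using BddMeasurable.sum fun i (_ : i ∈ Finset.univ) => hbdd i
    rw [fapInt_ofMeasure hsum, integral_finsetSum _ fun i _ => (hbdd i).integrable P]
    refine Finset.sum_congr rfl fun i _ => ?_
    rw [← hP i, integral_map (measurable_pi_apply i).aemeasurable (hf i).aestronglyMeasurable]
  exact iInf₂_le_of_le (ofMeasure P) hPU (EReal.coe_le_coe_iff.2 hint.le)

lemma measure_eq_zero_of_mem_acFAPs [∀ i, IsFiniteMeasure (μ i)] {ν : Measure (∀ i, Ω i)}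
    {Q : MSet (∀ i, Ω i) → unitInterval} (hQν : Q ∈ acFAPs ν) (hQμ : Q ∈ couplings μ) {i : Fin n}
    {B : Set (Ω i)} (hB : MeasurableSet B) (hνB : ν ((fun ω => ω i) ⁻¹' B) = 0) : μ i B = 0 :=
  (measureReal_eq_zero_iff).1 ((hQμ.2 i B hB).symm.trans (hQν.2 _ hνB))

theorem dualCond_annihilatingFAPs_iff [∀ i, MeasurableSingletonClass (Ω i)]
    [∀ i, IsProbabilityMeasure (μ i)] {ν : Measure (∀ i, Ω i)} {F : Set ((∀ i, Ω i) → ℝ)}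
    (hF : ∀ f ∈ F, Measurable f ∧ MemLp f ∞ ν) {i₀ : Fin n}
    (hdisc : ∀ i ≠ i₀, ∃ S : Set (Ω i), S.Countable ∧ ν ((fun ω => ω i) ⁻¹' Sᶜ) = 0) :
    DualCond μ (annihilatingFAPs ν F) ↔
      ∃ P : Measure (∀ i, Ω i), IsProbabilityMeasure P ∧ (∀ i, P.map (fun ω => ω i) = μ i) ∧
        P ≪ ν ∧ ∀ f ∈ F, ∫ ω, f ω ∂P = 0 := by
  constructor
  · intro hμ
    obtain ⟨Q, hQ, hQμ⟩ := inter_couplings_nonempty_of_dualCond (fun Q hQ => hQ.1.1)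
      (isCompact_annihilatingFAPs hF) (convex_image_toRealFun_annihilatingFAPs hF) hμ
    obtain ⟨P, hP, rfl⟩ := exists_ofMeasure_eq_of_mem_couplings i₀ hQμ fun i hi =>
      let ⟨S, hS, hνS⟩ := hdisc i hi
      ⟨S, hS, measure_eq_zero_of_mem_acFAPs hQ.1 hQμ hS.measurableSet.compl hνS⟩
    exact ⟨P, hP, map_eval_eq_of_ofMeasure_mem_couplings hQμ,
      (ofMeasure_mem_annihilatingFAPs_iff hF).1 hQ⟩
  · rintro ⟨P, hP, hPμ, hPF⟩
    exact dualCond_of_ofMeasure_mem hPμ ((ofMeasure_mem_annihilatingFAPs_iff hF).2 hPF)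

end AnnihilatingMeasures

section Martingale

variable {n : ℕ} {hn : 0 < n} {ν : Measure (Fin n → ℝ)}

/-- The functions on `ℝⁿ` whose integrals must vanish for `(π_1, …, π_n)` to be a martingale with
mean `0`: the coordinate `π_1` and the products `(π_{i+1} - π_i) g(π_1, …, π_i)` with `g` bounded
Borel, encoded as in `IsMartFAP`. -/
def martingaleTests (hn : 0 < n) : Set ((Fin n → ℝ) → ℝ) :=
  {f | f = (fun ω => ω ⟨0, hn⟩) ∨ ∃ i j : Fin n, (j : ℕ) = (i : ℕ) + 1 ∧
    ∃ g : (Fin n → ℝ) → ℝ, Measurable g ∧ (∃ C, ∀ x, |g x| ≤ C) ∧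
      (∀ x y : Fin n → ℝ, (∀ k : Fin n, k ≤ i → x k = y k) → g x = g y) ∧
      f = fun ω => (ω j - ω i) * g ω}

lemma forall_mem_martingaleTests {p : ((Fin n → ℝ) → ℝ) → Prop} :
    (∀ f ∈ martingaleTests hn, p f) ↔ p (fun ω => ω ⟨0, hn⟩) ∧
      ∀ i j : Fin n, (j : ℕ) = (i : ℕ) + 1 →
        ∀ g : (Fin n → ℝ) → ℝ, Measurable g → (∃ C, ∀ x, |g x| ≤ C) →
          (∀ x y : Fin n → ℝ, (∀ k : Fin n, k ≤ i → x k = y k) → g x = g y) →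
          p fun ω => (ω j - ω i) * g ω := by
  constructor
  · exact fun h => ⟨h _ (.inl rfl), fun i j hij g hg hgb hgi =>
      h _ (.inr ⟨i, j, hij, g, hg, hgb, hgi, rfl⟩)⟩
  · rintro ⟨hfirst, hdiff⟩ f (rfl | ⟨i, j, hij, g, hg, hgb, hgi, rfl⟩)
    exacts [hfirst, hdiff i j hij g hg hgb hgi]

lemma measurable_memLp_top_of_mem_martingaleTests (hν : ∀ i, MemLp (fun ω => ω i) ∞ ν) :
    ∀ f ∈ martingaleTests hn, Measurable f ∧ MemLp f ∞ ν := by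
  refine forall_mem_martingaleTests.2 ⟨⟨measurable_pi_apply _, hν _⟩, ?_⟩
  rintro i j - g hg ⟨C, hC⟩ -
  exact ⟨by fun_prop, (memLp_top_of_bound hg.aestronglyMeasurable C (.of_forall hC)).mul
    ((hν j).sub (hν i))⟩

lemma isMartFAP_iff_of_mem_acFAPs (hν : ∀ i, MemLp (fun ω => ω i) ∞ ν)
    {Q : MSet (Fin n → ℝ) → unitInterval} (hQ : Q ∈ acFAPs ν) :
    IsMartFAP hn Q ↔ ∀ f ∈ martingaleTests hn, fapIntR Q f = 0 := by
  rw [forall_mem_martingaleTests]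
  exact and_iff_right fun i => fapIntegrable_of_memLp_top hQ (measurable_pi_apply i) (hν i)

lemma isMartMeas_iff_of_absolutelyContinuous (hν : ∀ i, MemLp (fun ω => ω i) ∞ ν)
    {P : Measure (Fin n → ℝ)} [IsFiniteMeasure P] (hPν : P ≪ ν) :
    IsMartMeas hn P ↔ ∀ f ∈ martingaleTests hn, ∫ ω, f ω ∂P = 0 := by
  rw [forall_mem_martingaleTests]
  refine and_iff_right fun i => ?_
  obtain ⟨g, hg, hig⟩ := exists_bddMeasurable_ae_eq (measurable_pi_apply i) (hν i)
  exact (hg.integrable P).congr (hPν.ae_eq hig).symm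

lemma setOf_isMartFAP_eq_annihilatingFAPs (hν : ∀ i, MemLp (fun ω => ω i) ∞ ν) :
    {Q | IsFAP Q ∧ (∀ A : MSet (Fin n → ℝ), ν A.1 = 0 → (Q A : ℝ) = 0) ∧ IsMartFAP hn Q} =
      annihilatingFAPs ν (martingaleTests hn) := by
  ext Q
  exact and_assoc.symm.trans (and_congr_right (isMartFAP_iff_of_mem_acFAPs hν))

theorem dualCond_iff_exists_sigma_additive_martingale_general (hn : 0 < n) (μ : Fin n → Measure ℝ)
    [∀ i, IsProbabilityMeasure (μ i)] (ν : Measure (Fin n → ℝ)) {i₀ : Fin n}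
    (hdisc : ∀ i ≠ i₀, ∃ S : Set ℝ, S.Countable ∧ ν ((fun ω => ω i) ⁻¹' Sᶜ) = 0)
    (hν : ∀ i, MemLp (fun ω => ω i) ∞ ν) :
    DualCond μ {Q | IsFAP Q ∧
        (∀ A : MSet (Fin n → ℝ), ν A.1 = 0 → (Q A : ℝ) = 0) ∧ IsMartFAP hn Q} ↔
      ∃ P : Measure (Fin n → ℝ), IsProbabilityMeasure P ∧
        (∀ i : Fin n, P.map (fun ω => ω i) = μ i) ∧ P ≪ ν ∧ IsMartMeas hn P := by
  rw [setOf_isMartFAP_eq_annihilatingFAPs hν,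
    dualCond_annihilatingFAPs_iff (measurable_memLp_top_of_mem_martingaleTests hν) hdisc]
  exact exists_congr fun P => and_congr_right fun hP => and_congr_right fun _ =>
    and_congr_right fun hPν => (isMartMeas_iff_of_absolutelyContinuous hν hPν).symm

lemma measure_preimage_compl_eq_zero_of_map_eq_one {α β : Type*} [MeasurableSpace α]
    [MeasurableSpace β] {P : Measure α} [IsProbabilityMeasure P] {φ : α → β} (hφ : Measurable φ)
    {S : Set β} (hS : MeasurableSet S) (hPS : P.map φ S = 1) : P (φ ⁻¹' Sᶜ) = 0 := by
  rw [Measure.map_apply hφ hS] at hPS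
  exact (prob_compl_eq_zero_iff (hφ hS)).2 hPS

lemma memLp_top_eval_of_isCompact {P : Measure (Fin n → ℝ)} [IsProbabilityMeasure P]
    {A : Set (Fin n → ℝ)} (hA : IsCompact A) (hPA : P A = 1) (i : Fin n) :
    MemLp (fun ω => ω i) ∞ P := by
  obtain ⟨C, hC⟩ := hA.isBounded.exists_norm_le
  refine memLp_top_of_bound (measurable_pi_apply i).aestronglyMeasurable C ?_
  filter_upwards [mem_ae_iff.2 ((prob_compl_eq_zero_iff hA.measurableSet).2 hPA)] with ω hω
  exact (norm_le_pi_norm ω i).trans (hC ω hω)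

end Martingale

/-- on `Ω = ℝⁿ`, let `P*` be a σ-additive probability measure with
compact support whose marginals are all discrete except possibly one, and let
`𝒰 = {Q ∈ ℙ : Q ≪ P* and (π_1,…,π_n) is a Q-martingale}`. Then
`Σᵢ μᵢ(fᵢ) ≥ inf_{Q ∈ 𝒰} Q(⊕ᵢ fᵢ)` for all bounded Borel `fᵢ` (with `inf ∅ = ∞`)
iff there is a σ-additive probability measure `P` with marginals `μ_1,…,μ_n`,
`P ≪ P*`, and `(π_1,…,π_n)` a `P`-martingale. -/
theorem dualCond_iff_exists_sigma_additive_martingale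
    {n : ℕ} (hn : 0 < n) (μ : Fin n → Measure ℝ) [∀ i, IsProbabilityMeasure (μ i)]
    (Pstar : MeasureTheory.Measure (Fin n → ℝ)) [IsProbabilityMeasure Pstar]
    (hdisc : ∃ i₀ : Fin n, ∀ i : Fin n, i ≠ i₀ →
      ∃ S : Set ℝ, S.Countable ∧ Pstar.map (fun ω => ω i) S = 1)
    (hcomp : ∃ A : Set (Fin n → ℝ), IsCompact A ∧ Pstar A = 1) :
    DualCond μ {Q | IsFAP Q ∧
        (∀ A : MSet (Fin n → ℝ), Pstar A.1 = 0 → (Q A : ℝ) = 0) ∧ IsMartFAP hn Q} ↔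
      ∃ P : MeasureTheory.Measure (Fin n → ℝ), IsProbabilityMeasure P ∧
        (∀ i : Fin n, P.map (fun ω => ω i) = μ i) ∧ P ≪ Pstar ∧ IsMartMeas hn P := by
  obtain ⟨i₀, hdisc⟩ := hdisc
  obtain ⟨A, hA, hPA⟩ := hcomp
  exact dualCond_iff_exists_sigma_additive_martingale_general hn μ Pstar (i₀ := i₀)
    (fun i hi => (hdisc i hi).imp fun S hS => ⟨hS.1,
      measure_preimage_compl_eq_zero_of_map_eq_one (measurable_pi_apply i) hS.1.measurableSet hS.2⟩)
    (memLp_top_eval_of_isCompact hA hPA)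

end FATransport
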